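/- Assume m ≥ 3 and that ∂_t a(p,r) is a nondegenerate bilinear form on ℝᵐ (the lightlike metric is generic at (p,r)). Suppose Ψ has trivial 1-jet at (p,r) and for all U, V ∈ ℝᵐ × ℝ the function Δ_{U,V} vanishes at (p,r) together with its first and second Fréchet derivatives. Then D³φ_{(p,r)} = 0. -/

import Mathlib

/-- The defect of the isometry equation for the lightlike metric
`g_{(x,t)}(U,V) = a(x,t)(U_M, V_M)` on `M × I ⊆ ℝᵐ × ℝ` under a candidate isometry
`Ψ = (φ, δ)`:
`Δ_{U,V}(v) = a(Ψ(v))(Dφ_v U, Dφ_v V) − a(v)(U_M, V_M)`. -/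
noncomputable def lightDelta (m : ℕ)
    (a : (Fin m → ℝ) → ℝ → ((Fin m → ℝ) →L[ℝ] (Fin m → ℝ) →L[ℝ] ℝ))
    (φ : (Fin m → ℝ) × ℝ → (Fin m → ℝ)) (δ : (Fin m → ℝ) × ℝ → ℝ)
    (U V : (Fin m → ℝ) × ℝ) (v : (Fin m → ℝ) × ℝ) : ℝ :=
  a (φ v) (δ v) (fderiv ℝ φ v U) (fderiv ℝ φ v V) - a v.1 v.2 U.1 V.1

/-!
Since `Ψ = (φ, δ)` has trivial `1`-jet, `DΔ_{U,V} = 0` at the base point says that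
`a(D²φ(W, U), V) + a(U, D²φ(W, V)) = 0`, and since `D²φ` is symmetric the permutation trick behind
Koszul's formula gives `D²φ = 0`. Then, with `s = D²δ`, `h = ∂_t a` and `T = D³φ`,
`D²Δ_{U,V} = 0` becomes
`s(X, W) h(U, V) + a(T(X, W, U), V) + a(U, T(X, W, V)) = 0`.
The same trick now expresses `T` through `s` and `h`, and the symmetry of `T` in its first two
arguments turns into `s(W, ·) ∧ h(X, ·) = s(X, ·) ∧ h(W, ·)`. Evaluating this on three pairs of
vectors dual under `h` forces `s = 0`, after which the trick applies once more and gives `T = 0`.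
-/

section BilinearAlgebra

open Module

theorem two_mul_eq_of_symm_of_add_swap {ι R : Type*} [CommRing R] {C Q : ι → ι → ι → R}
    (hsymm : ∀ x y z, C x y z = C y x z) (hadd : ∀ x y z, C x y z + C x z y = Q x y z)
    (x y z : ι) : 2 * C x y z = Q x y z + Q y x z - Q z x y := by
  linear_combination hadd x y z + hadd y x z - hadd z x y + hsymm x y z + hsymm z x y - hsymm y z x

theorem eq_zero_of_symm_of_skew {ι E R : Type*} [Zero E] [CommRing R] [IsAddTorsionFree R]
    {B : E → E → R} (hsymm : ∀ u v, B u v = B v u) (hnondeg : ∀ u, (∀ v, B u v = 0) → u = 0)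
    {π : ι → E} (hπ : Function.Surjective π) {S : ι → ι → E} (hS : ∀ W U, S W U = S U W)
    (hskew : ∀ W U V, B (S W U) (π V) + B (π U) (S W V) = 0) (W U : ι) : S W U = 0 := by
  refine hnondeg _ (hπ.forall.2 fun V ↦ ?_)
  have hkoszul := two_mul_eq_of_symm_of_add_swap (C := fun W U V ↦ B (S W U) (π V))
    (Q := fun _ _ _ ↦ 0) (fun W U V ↦ by simp only [hS W U])
    (fun W U V ↦ by simpa only [hsymm (π U)] using hskew W U V) W U V
  exact self_eq_neg.1 (by linear_combination hkoszul)

-- For the functionals `s W = s W ·` and `h X = h X ·` the conclusion is `s W ∧ h X = s X ∧ h W`.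
theorem wedge_symm_of_symm_of_add_swap {ι R : Type*} [CommRing R] {C : ι → ι → ι → ι → R}
    {s h : ι → ι → R} (hsymm₁₂ : ∀ X W U V, C X W U V = C W X U V)
    (hsymm₂₃ : ∀ X W U V, C X W U V = C X U W V)
    (hadd : ∀ X W U V, s X W * h U V + C X W U V + C X W V U = 0) (W X U V : ι) :
    s W U * h X V - s W V * h X U = s X U * h W V - s X V * h W U := by
  have hkoszul (X W U V : ι) :
      2 * C X W U V = -(s X W * h U V) + -(s X U * h W V) - -(s X V * h W U) :=
    two_mul_eq_of_symm_of_add_swap (Q := fun W U V ↦ -(s X W * h U V)) (hsymm₂₃ X)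
      (fun W U V ↦ by linear_combination hadd X W U V) W U V
  linear_combination hkoszul W X U V - hkoszul X W U V + hadd X W U V - hadd W X U V
    + hsymm₁₂ X W U V - hsymm₁₂ X W V U

theorem eq_zero_of_wedge_symm {α β R : Type*} [CommRing R] [IsAddTorsionFree R] {s h : α → β → R}
    (hwedge : ∀ W X U V, s W U * h X V - s W V * h X U = s X U * h W V - s X V * h W U)
    {v : Fin 3 → α} {e : Fin 3 → β} (hve : ∀ i j, h (v i) (e j) = if i = j then 1 else 0) :
    s = 0 := by
  have hself (i : Fin 3) : h (v i) (e i) = 1 := by simp [hve]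
  have hne {i j : Fin 3} (hij : i ≠ j) : h (v i) (e j) = 0 := by simp [hve, hij]
  have hother (i : Fin 3) : ∃ j k, i ≠ j ∧ i ≠ k ∧ j ≠ k := by decide +revert
  have hexpand {i j : Fin 3} (hij : i ≠ j) (V : β) :
      s (v i) V = s (v i) (e j) * h (v j) V - s (v j) (e j) * h (v i) V := by
    linear_combination -hwedge (v i) (v j) (e j) V - s (v i) V * hself j + s (v j) V * hne hij
  have hdiag {i j : Fin 3} (hij : i ≠ j) : s (v i) (e i) = -s (v j) (e j) := by
    simpa [hself, hne hij.symm] using hexpand hij (e i)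
  have hdiag_zero (i : Fin 3) : s (v i) (e i) = 0 := by
    obtain ⟨j, k, hij, hik, hjk⟩ := hother i
    exact self_eq_neg.1 (by linear_combination hdiag hij - hdiag hjk + hdiag hik)
  have hbasis (i : Fin 3) (V : β) : s (v i) V = 0 := by
    obtain ⟨j, k, hij, hik, hjk⟩ := hother i
    have hoff : s (v i) (e j) = 0 := by simpa [hne hjk.symm, hne hij] using hexpand hik (e j)
    simpa [hoff, hdiag_zero] using hexpand hij V
  have hcollinear (X : α) (i : Fin 3) (V : β) : s X V = s X (e i) * h (v i) V := by
    simpa [hbasis, hself, sub_eq_zero, eq_comm] using hwedge (v i) X (e i) V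
  funext X V
  have hvanish : s X (e 0) = 0 := by simpa [hve] using hcollinear X 1 (e 0)
  simpa [hvanish] using hcollinear X 0 V

variable {K V W : Type*} [Field K] [AddCommGroup V] [Module K V] [AddCommGroup W] [Module K W]

theorem exists_apply_eq_ite_of_linearIndependent {ι : Type*} [Finite ι] [DecidableEq ι]
    {f : ι → Dual K W} (hf : LinearIndependent K f) :
    ∃ e : ι → W, ∀ i j, f i (e j) = if i = j then 1 else 0 := by
  have hsurj : Function.Surjective (LinearMap.pi f) := by
    have hcoe : LinearIndependent K fun i ↦ (f i : W → K) :=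
      hf.map' (LinearMap.ltoFun K W K K) (LinearMap.ker_eq_bot.2 DFunLike.coe_injective)
    have hspan := span_flip_eq_top_iff_linearIndependent.2 hcoe
    have hrange : Set.range (flip fun i ↦ (f i : W → K)) = LinearMap.range (LinearMap.pi f) := rfl
    rwa [hrange, Submodule.span_eq, LinearMap.range_eq_top] at hspan
  choose e he using fun j ↦ hsurj (Pi.single j 1)
  exact ⟨e, fun i j ↦ by simpa [Pi.single_apply] using congrFun (he j) i⟩

theorem exists_linearIndependent_comp_of_le_rank {f : V →ₗ[K] W} {n : ℕ} (hn : n ≤ f.rank) :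
    ∃ v : Fin n → V, LinearIndependent K (f ∘ v) := by
  obtain ⟨w, hw⟩ := Module.le_rank_iff.1 hn
  choose v hv using fun i ↦ (w i).2
  have hfv : f ∘ v = (LinearMap.range f).subtype ∘ w := funext hv
  exact ⟨v, hfv ▸ hw.map' _ (Submodule.ker_subtype _)⟩

theorem exists_apply_eq_ite_of_le_rank {B : V →ₗ[K] W →ₗ[K] K} {n : ℕ} (hn : n ≤ B.rank) :
    ∃ (v : Fin n → V) (e : Fin n → W), ∀ i j, B (v i) (e j) = if i = j then 1 else 0 := by
  obtain ⟨v, hv⟩ := exists_linearIndependent_comp_of_le_rank hn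
  exact ⟨v, exists_apply_eq_ite_of_linearIndependent hv⟩

theorem le_rank_of_separatingLeft {B : V →ₗ[K] W →ₗ[K] K} (hB : B.SeparatingLeft) {n : ℕ}
    (hn : n ≤ Module.rank K V) : n ≤ B.rank := by
  have hinj : Function.Injective B :=
    LinearMap.ker_eq_bot.1 (LinearMap.separatingLeft_iff_ker_eq_bot.1 hB)
  rw [← Cardinal.lift_le, LinearMap.rank, lift_rank_range_of_injective B hinj]
  simpa using hn

end BilinearAlgebra

section SecondDerivative

open Filter Topology

variable {𝕜 E F G : Type*} [NontriviallyNormedField 𝕜] [NormedAddCommGroup E] [NormedSpace 𝕜 E]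
  [NormedAddCommGroup F] [NormedSpace 𝕜 F] [NormedAddCommGroup G] [NormedSpace 𝕜 G] {x : E}

theorem fderiv_zero_one_eq_deriv {g : E × 𝕜 → F} {p : E} {r : 𝕜}
    (hg : DifferentiableAt 𝕜 g (p, r)) :
    fderiv 𝕜 g (p, r) (0, 1) = deriv (fun t ↦ g (p, t)) r :=
  (hg.hasFDerivAt.comp_hasDerivAt r ((hasDerivAt_const r p).prodMk (hasDerivAt_id r))).deriv.symm

theorem eventually_hasFDerivAt {f : E → F} (hf : ContDiffAt 𝕜 2 f x) :
    ∀ᶠ y in 𝓝 x, HasFDerivAt f (fderiv 𝕜 f y) y :=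
  (hf.eventually (by simp)).mono fun _ hy ↦ (hy.differentiableAt (by simp)).hasFDerivAt

theorem hasFDerivAt_fderiv {f : E → F} (hf : ContDiffAt 𝕜 2 f x) :
    HasFDerivAt (fderiv 𝕜 f) (fderiv 𝕜 (fderiv 𝕜 f) x) x :=
  ((hf.fderiv_right (m := 1) (by norm_num)).differentiableAt (by simp)).hasFDerivAt

theorem hasFDerivAt_fderiv_apply {f : E → F} (hf : ContDiffAt 𝕜 2 f x) (W : E) :
    HasFDerivAt (fun y ↦ fderiv 𝕜 f y W) ((fderiv 𝕜 (fderiv 𝕜 f) x).flip W) x := by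
  simpa using (hasFDerivAt_fderiv hf).clm_apply (hasFDerivAt_const W x)

theorem fderiv_fderiv_apply_eq_of_eventuallyEq {f d : E → F} {d' : E →L[𝕜] F} {W : E}
    (hf : ContDiffAt 𝕜 2 f x) (hd : (fun y ↦ fderiv 𝕜 f y W) =ᶠ[𝓝 x] d)
    (hd' : HasFDerivAt d d' x) (X : E) : fderiv 𝕜 (fderiv 𝕜 f) x X W = d' X :=
  congrArg (· X) ((hasFDerivAt_fderiv_apply hf W).unique (hd'.congr_of_eventuallyEq hd))

theorem fderiv_fderiv_sub {f g : E → F} (hf : ContDiffAt 𝕜 2 f x) (hg : ContDiffAt 𝕜 2 g x)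
    (X W : E) :
    fderiv 𝕜 (fderiv 𝕜 fun y ↦ f y - g y) x X W
      = fderiv 𝕜 (fderiv 𝕜 f) x X W - fderiv 𝕜 (fderiv 𝕜 g) x X W := by
  refine fderiv_fderiv_apply_eq_of_eventuallyEq (hf.sub hg) ?_
    ((hasFDerivAt_fderiv_apply hf W).sub (hasFDerivAt_fderiv_apply hg W)) X
  filter_upwards [eventually_hasFDerivAt hf, eventually_hasFDerivAt hg] with y hfy hgy
  simp [(hfy.fun_sub hgy).fderiv]

theorem fderiv_fderiv_prodMk {f : E → F} {g : E → G} (hf : ContDiffAt 𝕜 2 f x)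
    (hg : ContDiffAt 𝕜 2 g x) (X W : E) :
    fderiv 𝕜 (fderiv 𝕜 fun y ↦ (f y, g y)) x X W
      = (fderiv 𝕜 (fderiv 𝕜 f) x X W, fderiv 𝕜 (fderiv 𝕜 g) x X W) := by
  refine fderiv_fderiv_apply_eq_of_eventuallyEq (hf.prodMk hg) ?_
    ((hasFDerivAt_fderiv_apply hf W).prodMk (hasFDerivAt_fderiv_apply hg W)) X
  filter_upwards [eventually_hasFDerivAt hf, eventually_hasFDerivAt hg] with y hfy hgy
  simp [(hfy.prodMk hgy).fderiv]

theorem fderiv_fderiv_clm_apply {c : E → F →L[𝕜] G} {u : E → F} (hc : ContDiffAt 𝕜 2 c x)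
    (hu : ContDiffAt 𝕜 2 u x) (X W : E) :
    fderiv 𝕜 (fderiv 𝕜 fun y ↦ c y (u y)) x X W
      = fderiv 𝕜 (fderiv 𝕜 c) x X W (u x) + fderiv 𝕜 c x X (fderiv 𝕜 u x W)
        + fderiv 𝕜 c x W (fderiv 𝕜 u x X) + c x (fderiv 𝕜 (fderiv 𝕜 u) x X W) := by
  rw [fderiv_fderiv_apply_eq_of_eventuallyEq (hc.clm_apply hu)
    (d := fun y ↦ c y (fderiv 𝕜 u y W) + fderiv 𝕜 c y W (u y)) ?_
    ((hc.differentiableAt (by simp)).hasFDerivAt.clm_apply (hasFDerivAt_fderiv_apply hu W)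
      |>.add <| (hasFDerivAt_fderiv_apply hc W).clm_apply
        (hu.differentiableAt (by simp)).hasFDerivAt)]
  · simp only [add_apply, ContinuousLinearMap.comp_apply, ContinuousLinearMap.flip_apply]
    abel
  · filter_upwards [eventually_hasFDerivAt hc, eventually_hasFDerivAt hu] with y hcy huy
    simp [(hcy.clm_apply huy).fderiv]

theorem fderiv_fderiv_clm_apply_const {c : E → F →L[𝕜] G} (hc : ContDiffAt 𝕜 2 c x) (u : F)
    (X W : E) :
    fderiv 𝕜 (fderiv 𝕜 fun y ↦ c y u) x X W = fderiv 𝕜 (fderiv 𝕜 c) x X W u := by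
  simp [fderiv_fderiv_clm_apply hc contDiffAt_const]

theorem fderiv_fderiv_comp {g : F → G} {f : E → F} (hg : ContDiffAt 𝕜 2 g (f x))
    (hf : ContDiffAt 𝕜 2 f x) (X W : E) :
    fderiv 𝕜 (fderiv 𝕜 (g ∘ f)) x X W
      = fderiv 𝕜 (fderiv 𝕜 g) (f x) (fderiv 𝕜 f x X) (fderiv 𝕜 f x W)
        + fderiv 𝕜 g (f x) (fderiv 𝕜 (fderiv 𝕜 f) x X W) := by
  rw [fderiv_fderiv_apply_eq_of_eventuallyEq (hg.comp x hf)
    (d := fun y ↦ fderiv 𝕜 g (f y) (fderiv 𝕜 f y W)) ?_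
    (((hasFDerivAt_fderiv hg).comp x (hf.differentiableAt (by simp)).hasFDerivAt).clm_apply
      (hasFDerivAt_fderiv_apply hf W))]
  · simp [add_comm]
  · filter_upwards [hf.continuousAt.eventually (eventually_hasFDerivAt hg),
      eventually_hasFDerivAt hf] with y hgy hfy
    simp [(hgy.comp y hfy).fderiv]

theorem fderiv_fderiv_fderiv_swap {𝕜 E F : Type*} [RCLike 𝕜] [NormedAddCommGroup E]
    [NormedSpace 𝕜 E] [NormedAddCommGroup F] [NormedSpace 𝕜 F] {f : E → F} {x : E}
    (hf : ContDiffAt 𝕜 3 f x) (X W U : E) :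
    fderiv 𝕜 (fderiv 𝕜 (fderiv 𝕜 f)) x X W U = fderiv 𝕜 (fderiv 𝕜 (fderiv 𝕜 f)) x X U W := by
  have hf' : ContDiffAt 𝕜 2 (fderiv 𝕜 f) x := hf.fderiv_right (by norm_num)
  have happly (W U : E) : HasFDerivAt (fun y ↦ fderiv 𝕜 (fderiv 𝕜 f) y W U)
      (((fderiv 𝕜 (fderiv 𝕜 (fderiv 𝕜 f)) x).flip W).flip U) x := by
    simpa using (hasFDerivAt_fderiv_apply hf' W).clm_apply (hasFDerivAt_const U x)
  have hsymm : (fun y ↦ fderiv 𝕜 (fderiv 𝕜 f) y W U)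
      =ᶠ[𝓝 x] fun y ↦ fderiv 𝕜 (fderiv 𝕜 f) y U W := by
    filter_upwards [(hf.of_le (m := 2) (by norm_num)).eventually (by simp)] with y hy
    exact (hy.isSymmSndFDerivAt (by simp)).eq W U
  exact congrArg (· X) ((happly W U).unique ((happly U W).congr_of_eventuallyEq hsymm))

end SecondDerivative

section LightlikeIsometry

/-- A self-map has trivial `1`-jet at a point if it fixes the point and its derivative there is
the identity. -/
structure HasTrivialOneJetAt {F : Type*} [NormedAddCommGroup F] [NormedSpace ℝ F] (Ψ : F → F)
    (x : F) : Prop where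
  apply_eq : Ψ x = x
  hasFDerivAt : HasFDerivAt Ψ (ContinuousLinearMap.id ℝ F) x

variable {E : Type*} [NormedAddCommGroup E] [NormedSpace ℝ E]

/-- The function `Δ_{U,V}` measuring by how much `Ψ = (φ, δ)` fails to be an isometry of the
lightlike metric `A v U.1 V.1` on `E × ℝ`; the coefficient map `A` is uncurried, so that it can be
differentiated as a map on `E × ℝ`. -/
noncomputable def isometryDefect (A : E × ℝ → E →L[ℝ] E →L[ℝ] ℝ) (φ : E × ℝ → E) (δ : E × ℝ → ℝ)
    (U V v : E × ℝ) : ℝ :=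
  A (φ v, δ v) (fderiv ℝ φ v U) (fderiv ℝ φ v V) - A v U.1 V.1

variable {A : E × ℝ → E →L[ℝ] E →L[ℝ] ℝ} {φ : E × ℝ → E} {δ : E × ℝ → ℝ} {x : E × ℝ}

theorem HasTrivialOneJetAt.fderiv_eq_fst (hΨ : HasTrivialOneJetAt (fun v ↦ (φ v, δ v)) x) :
    fderiv ℝ φ x = ContinuousLinearMap.fst ℝ E ℝ :=
  hΨ.hasFDerivAt.fst.fderiv

theorem fderiv_isometryDefect (hA : DifferentiableAt ℝ A x) (hφ : ContDiffAt ℝ 2 φ x)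
    (hΨ : HasTrivialOneJetAt (fun v ↦ (φ v, δ v)) x) (U V W : E × ℝ) :
    fderiv ℝ (isometryDefect A φ δ U V) x W
      = A x (fderiv ℝ (fderiv ℝ φ) x W U) V.1 + A x U.1 (fderiv ℝ (fderiv ℝ φ) x W V) := by
  have hΨx : (φ x, δ x) = x := hΨ.apply_eq
  have hAΨ : HasFDerivAt (A ∘ fun v ↦ (φ v, δ v)) (fderiv ℝ A x) x := by
    have hA' : HasFDerivAt A (fderiv ℝ A x) (φ x, δ x) := hΨx.symm ▸ hA.hasFDerivAt
    exact HasFDerivAt.comp (G := E →L[ℝ] E →L[ℝ] ℝ) x hA' hΨ.hasFDerivAt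
  have hpullback := (hAΨ.clm_apply (hasFDerivAt_fderiv_apply hφ U)).clm_apply
    (hasFDerivAt_fderiv_apply hφ V)
  have hmetric := (hA.hasFDerivAt.clm_apply (hasFDerivAt_const U.1 x)).clm_apply
    (hasFDerivAt_const V.1 x)
  have hdefect : HasFDerivAt (isometryDefect A φ δ U V) _ x := hpullback.sub hmetric
  simp only [hdefect.fderiv, Function.comp_apply, hΨx, hΨ.fderiv_eq_fst,
    ContinuousLinearMap.coe_fst', ContinuousLinearMap.flip_add, add_apply,
    ContinuousLinearMap.comp_zero, zero_add, sub_apply, ContinuousLinearMap.comp_apply,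
    ContinuousLinearMap.flip_apply]
  abel

theorem fderiv_fderiv_eq_zero_of_fderiv_isometryDefect_eq_zero (hA : DifferentiableAt ℝ A x)
    (hφ : ContDiffAt ℝ 2 φ x) (hΨ : HasTrivialOneJetAt (fun v ↦ (φ v, δ v)) x)
    (hsymm : ∀ u v, A x u v = A x v u) (hnondeg : ∀ u, (∀ v, A x u v = 0) → u = 0)
    (hΔ : ∀ U V, fderiv ℝ (isometryDefect A φ δ U V) x = 0) : fderiv ℝ (fderiv ℝ φ) x = 0 := by
  refine ContinuousLinearMap.ext fun W ↦ ContinuousLinearMap.ext fun U ↦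
    eq_zero_of_symm_of_skew hsymm hnondeg Prod.fst_surjective
      (hφ.isSymmSndFDerivAt (by simp)).eq (fun W U V ↦ ?_) W U
  simp [← fderiv_isometryDefect hA hφ hΨ, hΔ]

theorem fderiv_fderiv_comp_of_hasTrivialOneJetAt {G : Type*} [NormedAddCommGroup G]
    [NormedSpace ℝ G] {g : E × ℝ → G} (hg : ContDiffAt ℝ 2 g x) (hφ : ContDiffAt ℝ 2 φ x)
    (hδ : ContDiffAt ℝ 2 δ x) (hΨ : HasTrivialOneJetAt (fun v ↦ (φ v, δ v)) x)
    (hφ₂ : fderiv ℝ (fderiv ℝ φ) x = 0) (X W : E × ℝ) :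
    fderiv ℝ (fderiv ℝ (g ∘ fun v ↦ (φ v, δ v))) x X W
      = fderiv ℝ (fderiv ℝ g) x X W + fderiv ℝ (fderiv ℝ δ) x X W • fderiv ℝ g x (0, 1) := by
  have hΨx : (φ x, δ x) = x := hΨ.apply_eq
  rw [fderiv_fderiv_comp (hΨx.symm ▸ hg) (hφ.prodMk hδ), fderiv_fderiv_prodMk hφ hδ,
    hΨ.hasFDerivAt.fderiv, hΨx, hφ₂]
  simp [← map_smul]

theorem fderiv_fderiv_isometryDefect (hA : ContDiffAt ℝ 2 A x) (hφ : ContDiffAt ℝ 3 φ x)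
    (hδ : ContDiffAt ℝ 2 δ x) (hΨ : HasTrivialOneJetAt (fun v ↦ (φ v, δ v)) x)
    (hφ₂ : fderiv ℝ (fderiv ℝ φ) x = 0) (U V X W : E × ℝ) :
    fderiv ℝ (fderiv ℝ (isometryDefect A φ δ U V)) x X W
      = fderiv ℝ (fderiv ℝ δ) x X W * fderiv ℝ A x (0, 1) U.1 V.1
        + A x (fderiv ℝ (fderiv ℝ (fderiv ℝ φ)) x X W U) V.1
        + A x U.1 (fderiv ℝ (fderiv ℝ (fderiv ℝ φ)) x X W V) := by
  have hφ' : ContDiffAt ℝ 2 (fderiv ℝ φ) x := hφ.fderiv_right (by norm_num)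
  have hΨx : (φ x, δ x) = x := hΨ.apply_eq
  have hφC : ContDiffAt ℝ 2 φ x := hφ.of_le (by norm_num)
  have hAΨ : ContDiffAt ℝ 2 (A ∘ fun v ↦ (φ v, δ v)) x :=
    ContDiffAt.comp x (hΨx.symm ▸ hA) (hφC.prodMk hδ)
  have hu (U : E × ℝ) : ContDiffAt ℝ 2 (fun v ↦ fderiv ℝ φ v U) x := hφ'.clm_apply contDiffAt_const
  have hu₁ (U : E × ℝ) : fderiv ℝ (fun v ↦ fderiv ℝ φ v U) x = 0 := by
    simp [(hasFDerivAt_fderiv_apply hφC U).fderiv, hφ₂]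
  have hdefect : isometryDefect A φ δ U V = fun v ↦
    (A ∘ fun v ↦ (φ v, δ v)) v (fderiv ℝ φ v U) (fderiv ℝ φ v V) - A v U.1 V.1 := rfl
  rw [hdefect, fderiv_fderiv_sub ((hAΨ.clm_apply (hu U)).clm_apply (hu V))
      ((hA.clm_apply contDiffAt_const).clm_apply contDiffAt_const),
    fderiv_fderiv_clm_apply (hAΨ.clm_apply (hu U)) (hu V), fderiv_fderiv_clm_apply hAΨ (hu U),
    fderiv_fderiv_comp_of_hasTrivialOneJetAt hA hφC hδ hΨ hφ₂,
    fderiv_fderiv_clm_apply_const (hA.clm_apply contDiffAt_const),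
    fderiv_fderiv_clm_apply_const hA, fderiv_fderiv_clm_apply_const hφ',
    fderiv_fderiv_clm_apply_const hφ']
  simp only [hΨ.fderiv_eq_fst, ContinuousLinearMap.coe_fst', add_apply, smul_apply, hu₁,
    zero_apply, map_zero, add_zero, Function.comp_apply, hΨx, smul_eq_mul]
  ring

theorem fderiv_fderiv_snd_eq_zero_of_fderiv_fderiv_isometryDefect_eq_zero
    (hA : ContDiffAt ℝ 2 A x) (hφ : ContDiffAt ℝ 3 φ x) (hδ : ContDiffAt ℝ 2 δ x)
    (hΨ : HasTrivialOneJetAt (fun v ↦ (φ v, δ v)) x) (hsymm : ∀ u v, A x u v = A x v u)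
    (hrank : 3 ≤ (fderiv ℝ A x (0, 1)).toLinearMap₁₂.rank)
    (hφ₂ : fderiv ℝ (fderiv ℝ φ) x = 0)
    (hΔ : ∀ U V, fderiv ℝ (fderiv ℝ (isometryDefect A φ δ U V)) x = 0) :
    fderiv ℝ (fderiv ℝ δ) x = 0 := by
  have hφ' : ContDiffAt ℝ 2 (fderiv ℝ φ) x := hφ.fderiv_right (by norm_num)
  have hwedge := wedge_symm_of_symm_of_add_swap
    (C := fun X W U V ↦ A x (fderiv ℝ (fderiv ℝ (fderiv ℝ φ)) x X W U) V.1)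
    (s := fun X W ↦ fderiv ℝ (fderiv ℝ δ) x X W) (h := fun U V ↦ fderiv ℝ A x (0, 1) U.1 V.1)
    (fun X W U V ↦ by simp only [(hφ'.isSymmSndFDerivAt (by simp)).eq X W])
    (fun X W U V ↦ by simp only [fderiv_fderiv_fderiv_swap hφ X W U])
    (fun X W U V ↦ by
      simp [hsymm _ U.1, ← fderiv_fderiv_isometryDefect hA hφ hδ hΨ hφ₂, hΔ])
  obtain ⟨v, e, hve⟩ := exists_apply_eq_ite_of_le_rank (n := 3) hrank
  have hδ₂ := eq_zero_of_wedge_symm hwedge (v := fun i ↦ (v i, 0)) (e := fun j ↦ (e j, 0)) hve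
  exact ContinuousLinearMap.ext fun X ↦ ContinuousLinearMap.ext fun W ↦ congrFun₂ hδ₂ X W

theorem lightlike_third_derivative_vanishes_general {p : E} {r : ℝ}
    (hA : ContDiffAt ℝ 2 A (p, r)) (hφ : ContDiffAt ℝ 3 φ (p, r)) (hδ : ContDiffAt ℝ 2 δ (p, r))
    (hsymm : ∀ u v, A (p, r) u v = A (p, r) v u)
    (hnondeg : ∀ u, (∀ v, A (p, r) u v = 0) → u = 0)
    (hrank : 3 ≤ (deriv (fun t ↦ A (p, t)) r).toLinearMap₁₂.rank)
    (hΨ : HasTrivialOneJetAt (fun v ↦ (φ v, δ v)) (p, r))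
    (hΔ' : ∀ U V, fderiv ℝ (isometryDefect A φ δ U V) (p, r) = 0)
    (hΔ'' : ∀ U V, fderiv ℝ (fderiv ℝ (isometryDefect A φ δ U V)) (p, r) = 0) :
    fderiv ℝ (fderiv ℝ (fderiv ℝ φ)) (p, r) = 0 := by
  have hA₁ : DifferentiableAt ℝ A (p, r) := hA.differentiableAt (by simp)
  have hφ₂ : fderiv ℝ (fderiv ℝ φ) (p, r) = 0 :=
    fderiv_fderiv_eq_zero_of_fderiv_isometryDefect_eq_zero hA₁ (hφ.of_le (by norm_num)) hΨ hsymm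
      hnondeg hΔ'
  have hA_t : fderiv ℝ A (p, r) (0, 1) = deriv (fun t ↦ A (p, t)) r :=
    fderiv_zero_one_eq_deriv (𝕜 := ℝ) (F := E →L[ℝ] E →L[ℝ] ℝ) hA₁
  have hδ₂ : fderiv ℝ (fderiv ℝ δ) (p, r) = 0 :=
    fderiv_fderiv_snd_eq_zero_of_fderiv_fderiv_isometryDefect_eq_zero hA hφ hδ hΨ hsymm
      (hA_t ▸ hrank) hφ₂ hΔ''
  refine ContinuousLinearMap.ext fun X ↦ ContinuousLinearMap.ext fun W ↦
    ContinuousLinearMap.ext fun U ↦ eq_zero_of_symm_of_skew hsymm hnondeg Prod.fst_surjective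
      (fderiv_fderiv_fderiv_swap hφ X) (fun W U V ↦ ?_) W U
  simpa [hδ₂, hΔ''] using (fderiv_fderiv_isometryDefect hA hφ hδ hΨ hφ₂ U V X W).symm

end LightlikeIsometry

/-- For `m ≥ 3` and a lightlike metric generic at `(p,r)` (`∂_t a(p,r)` nondegenerate),
a `3`-isometry `Ψ = (φ, δ)` with trivial `1`-jet at `(p,r)` satisfies
`D³φ_{(p,r)} = 0`. -/
theorem lightlike_third_derivative_vanishes
    (m : ℕ) (hm : 3 ≤ m) (M : Set (Fin m → ℝ)) (hM : IsOpen M)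
    (p : Fin m → ℝ) (hp : p ∈ M)
    (I : Set ℝ) (hIopen : IsOpen I) (hIconn : I.OrdConnected)
    (r : ℝ) (hr : r ∈ I)
    (a : (Fin m → ℝ) → ℝ → ((Fin m → ℝ) →L[ℝ] (Fin m → ℝ) →L[ℝ] ℝ))
    (ha_smooth : ContDiffOn ℝ (⊤ : ℕ∞) (fun q : (Fin m → ℝ) × ℝ => a q.1 q.2) (M ×ˢ I))
    (ha_symm : ∀ x ∈ M, ∀ t ∈ I, ∀ U V : Fin m → ℝ, a x t U V = a x t V U)
    (ha_pos : ∀ x ∈ M, ∀ t ∈ I, ∀ U : Fin m → ℝ, U ≠ 0 → 0 < a x t U U)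
    (ha_generic : ∀ U : Fin m → ℝ,
      (∀ V : Fin m → ℝ, deriv (fun t => a p t) r U V = 0) → U = 0)
    (φ : (Fin m → ℝ) × ℝ → (Fin m → ℝ)) (δ : (Fin m → ℝ) × ℝ → ℝ)
    (hΨ_smooth : ContDiffOn ℝ (⊤ : ℕ∞) (fun v => (φ v, δ v)) (M ×ˢ I))
    (hΨ_maps : ∀ v ∈ M ×ˢ I, (φ v, δ v) ∈ M ×ˢ I)
    (hΨp : (φ (p, r), δ (p, r)) = (p, r))
    (hDΨp : fderiv ℝ (fun v => (φ v, δ v)) (p, r)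
      = ContinuousLinearMap.id ℝ ((Fin m → ℝ) × ℝ))
    (hΔ : ∀ U V : (Fin m → ℝ) × ℝ, lightDelta m a φ δ U V (p, r) = 0)
    (hΔ' : ∀ U V : (Fin m → ℝ) × ℝ, fderiv ℝ (lightDelta m a φ δ U V) (p, r) = 0)
    (hΔ'' : ∀ U V : (Fin m → ℝ) × ℝ,
      fderiv ℝ (fderiv ℝ (lightDelta m a φ δ U V)) (p, r) = 0) :
    fderiv ℝ (fderiv ℝ (fderiv ℝ φ)) (p, r) = 0 := by
  have hnhds : M ×ˢ I ∈ nhds (p, r) := (hM.prod hIopen).mem_nhds ⟨hp, hr⟩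
  have hA := ha_smooth.contDiffAt hnhds
  have hΨ := hΨ_smooth.contDiffAt hnhds
  have hnondeg (u : Fin m → ℝ) (hu : ∀ v, a p r u v = 0) : u = 0 := by
    by_contra hu₀
    exact (ha_pos p hp r hr u hu₀).ne' (hu u)
  have hsep : (deriv (fun t ↦ a p t) r).toLinearMap₁₂.SeparatingLeft := ha_generic
  have hrank : 3 ≤ (deriv (fun t ↦ a p t) r).toLinearMap₁₂.rank :=
    le_rank_of_separatingLeft hsep (by simpa using hm)
  have hjet : HasTrivialOneJetAt (fun v ↦ (φ v, δ v)) (p, r) :=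
    ⟨hΨp, hDΨp ▸ (hΨ.differentiableAt (by simp)).hasFDerivAt⟩
  exact lightlike_third_derivative_vanishes_general
    (hA.of_le ENat.LEInfty.out) (hΨ.fst.of_le ENat.LEInfty.out) (hΨ.snd.of_le ENat.LEInfty.out)
    (ha_symm p hp r hr) hnondeg hrank hjet hΔ' hΔ''
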